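/- Let ρ and σ be positive definite d×d density matrices and let (α,z) satisfy either 1 < α ≤ 2 with α/2 ≤ z ≤ α, or 2 ≤ α < ∞ with α−1 ≤ z ≤ α. Then the maximum of F_{α,z}(ρ, Σ_i p_i U_i σ U_i*) over all mixed unitary channels — i.e., over all finite families of d×d unitary matrices U_i and weights p_i ≥ 0 with Σ_i p_i = 1 — equals F_α^C(λ↓(ρ), λ↑(σ)), and it is attained by a single unitary conjugation. -/

import Mathlib

open Matrix
open scoped ComplexOrder

/-- Real power of a (Hermitian) matrix via functional calculus on eigenvalues,
with `(0:ℝ) ^ t = 0` for `t ≠ 0`. Returns `0` on non-Hermitian input. -/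
noncomputable def mpow {d : ℕ} (A : Matrix (Fin d) (Fin d) ℂ) (t : ℝ) :
    Matrix (Fin d) (Fin d) ℂ :=
  if hA : A.IsHermitian then
    (hA.eigenvectorUnitary : Matrix (Fin d) (Fin d) ℂ) *
      Matrix.diagonal (fun i => ((hA.eigenvalues i ^ t : ℝ) : ℂ)) *
      (star (hA.eigenvectorUnitary : Matrix (Fin d) (Fin d) ℂ))
  else 0

/-- The quantum α-z-fidelity
`F_{α,z}(ρ,σ) = (Tr[(σ^{(1-α)/(2z)} ρ^{α/z} σ^{(1-α)/(2z)})^z])^{1/α}`. -/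
noncomputable def Faz {d : ℕ} (ρ σ : Matrix (Fin d) (Fin d) ℂ) (α z : ℝ) : ℝ :=
  ((mpow (mpow σ ((1 - α) / (2 * z)) * mpow ρ (α / z) * mpow σ ((1 - α) / (2 * z))) z).trace.re)
    ^ (1 / α)

/-- The classical α-fidelity `F_α^C(p,q) = (Σ_i p_i^α q_i^{1-α})^{1/α}`. -/
noncomputable def FazC {d : ℕ} (p q : Fin d → ℝ) (α : ℝ) : ℝ :=
  (∑ i, p i ^ α * q i ^ (1 - α)) ^ (1 / α)

/-- The vector `p` rearranged in increasing order. -/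
noncomputable def sortUp {d : ℕ} (p : Fin d → ℝ) : Fin d → ℝ :=
  p ∘ Tuple.sort p

/-- The vector `p` rearranged in decreasing order. -/
noncomputable def sortDown {d : ℕ} (p : Fin d → ℝ) : Fin d → ℝ :=
  fun i => sortUp p i.rev

/-- `λ↑(A)`: the eigenvalues of a Hermitian matrix in increasing order. -/
noncomputable def eigUp {d : ℕ} {A : Matrix (Fin d) (Fin d) ℂ} (hA : A.IsHermitian) :
    Fin d → ℝ := sortUp hA.eigenvalues

/-- `λ↓(A)`: the eigenvalues of a Hermitian matrix in decreasing order. -/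
noncomputable def eigDown {d : ℕ} {A : Matrix (Fin d) (Fin d) ℂ} (hA : A.IsHermitian) :
    Fin d → ℝ := sortDown hA.eigenvalues

/-- Conjugated real diagonal matrix. -/
noncomputable def rdiag {d : ℕ} (v : Fin d → ℝ) : Matrix (Fin d) (Fin d) ℂ :=
  Matrix.diagonal (fun i => ((v i : ℝ) : ℂ))

lemma rdiag_star {d : ℕ} (v : Fin d → ℝ) : star (rdiag v) = rdiag v := by
  unfold rdiag
  rw [Matrix.star_eq_conjTranspose, Matrix.diagonal_conjTranspose]
  congr 1
  ext i
  simp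

lemma rdiag_mul {d : ℕ} (v w : Fin d → ℝ) : rdiag v * rdiag w = rdiag (fun i => v i * w i) := by
  simp [rdiag, Matrix.diagonal_mul_diagonal]

lemma rdiag_one {d : ℕ} : rdiag (fun _ : Fin d => (1 : ℝ)) = 1 := by
  simp [rdiag]

lemma rdiag_congr {d : ℕ} {v w : Fin d → ℝ} (h : ∀ i, v i = w i) : rdiag v = rdiag w := by
  rw [funext h]

lemma uni1 {d : ℕ} {V : Matrix (Fin d) (Fin d) ℂ} (hV : V ∈ Matrix.unitaryGroup (Fin d) ℂ) :
    star V * V = 1 := (Matrix.mem_unitaryGroup_iff').1 hV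

lemma uni2 {d : ℕ} {V : Matrix (Fin d) (Fin d) ℂ} (hV : V ∈ Matrix.unitaryGroup (Fin d) ℂ) :
    V * star V = 1 := (Matrix.mem_unitaryGroup_iff).1 hV

lemma uniS {d : ℕ} {V : Matrix (Fin d) (Fin d) ℂ} (hV : V ∈ Matrix.unitaryGroup (Fin d) ℂ) :
    star V ∈ Matrix.unitaryGroup (Fin d) ℂ := by
  rw [Matrix.mem_unitaryGroup_iff, star_star]; exact uni1 hV

lemma herm_conj {d : ℕ} (V : Matrix (Fin d) (Fin d) ℂ) (v : Fin d → ℝ) :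
    (V * rdiag v * star V).IsHermitian := by
  show star _ = _
  rw [star_mul, star_mul, star_star, rdiag_star, mul_assoc]

lemma spec_eq {d : ℕ} {A : Matrix (Fin d) (Fin d) ℂ} (hA : A.IsHermitian) :
    A = (hA.eigenvectorUnitary : Matrix (Fin d) (Fin d) ℂ) * rdiag hA.eigenvalues *
      star (hA.eigenvectorUnitary : Matrix (Fin d) (Fin d) ℂ) := by
  conv_lhs => rw [hA.spectral_theorem]
  rw [Unitary.conjStarAlgAut_apply]
  rfl

lemma mpow_conj {d : ℕ} {V : Matrix (Fin d) (Fin d) ℂ} (hV : V ∈ Matrix.unitaryGroup (Fin d) ℂ)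
    (v : Fin d → ℝ) (t : ℝ) :
    mpow (V * rdiag v * star V) t = V * rdiag (fun i => v i ^ t) * star V := by
  have hA := herm_conj V v
  have hs := spec_eq hA
  have hE := (hA.eigenvectorUnitary).2
  unfold mpow
  rw [dif_pos hA]
  set E : Matrix (Fin d) (Fin d) ℂ := (hA.eigenvectorUnitary : Matrix (Fin d) (Fin d) ℂ)
  set l := hA.eigenvalues
  have h1 : rdiag v * (star V * E) = (star V * E) * rdiag l := by
    calc rdiag v * (star V * E) = (star V * V) * rdiag v * (star V * E) := by rw [uni1 hV, one_mul]
      _ = star V * (V * rdiag v * star V) * E := by simp only [mul_assoc]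
      _ = star V * (E * rdiag l * star E) * E := by rw [← hs]
      _ = (star V * E) * rdiag l * (star E * E) := by simp only [mul_assoc]
      _ = _ := by rw [uni1 hE, mul_one]
  have h2 : rdiag (fun i => v i ^ t) * (star V * E) = (star V * E) * rdiag (fun i => l i ^ t) := by
    ext i j
    have h3 := congrFun (congrFun h1 i) j
    simp only [rdiag, Matrix.diagonal_mul, Matrix.mul_diagonal] at h3 ⊢
    by_cases hq : (star V * E) i j = 0
    · simp [hq]
    · rw [mul_comm] at h3
      have : v i = l j := by exact_mod_cast mul_left_cancel₀ hq h3
      rw [this, mul_comm]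
  change E * rdiag (fun i => l i ^ t) * star E = _
  calc E * rdiag (fun i => l i ^ t) * star E
      = (V * star V) * E * rdiag (fun i => l i ^ t) * star E := by rw [uni2 hV, one_mul]
    _ = V * ((star V * E) * rdiag (fun i => l i ^ t)) * star E := by simp only [mul_assoc]
    _ = V * (rdiag (fun i => v i ^ t) * (star V * E)) * star E := by rw [h2]
    _ = V * rdiag (fun i => v i ^ t) * star V * (E * star E) := by simp only [mul_assoc]
    _ = _ := by rw [uni2 hE, mul_one]

lemma trace_conj {d : ℕ} {V : Matrix (Fin d) (Fin d) ℂ} (hV : V ∈ Matrix.unitaryGroup (Fin d) ℂ)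
    (v : Fin d → ℝ) : (V * rdiag v * star V).trace.re = ∑ i, v i := by
  rw [Matrix.trace_mul_comm, ← mul_assoc, uni1 hV, one_mul]
  simp [rdiag, Matrix.trace_diagonal]

lemma conj_mul_conj {d : ℕ} {V : Matrix (Fin d) (Fin d) ℂ}
    (hV : V ∈ Matrix.unitaryGroup (Fin d) ℂ) (v w : Fin d → ℝ) :
    (V * rdiag v * star V) * (V * rdiag w * star V) = V * rdiag (fun i => v i * w i) * star V := by
  calc _ = V * rdiag v * (star V * V) * rdiag w * star V := by simp only [mul_assoc]
    _ = V * (rdiag v * rdiag w) * star V := by rw [uni1 hV, mul_one]; simp only [mul_assoc]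
    _ = _ := by rw [rdiag_mul]

lemma diag_perm {d : ℕ} {A : Matrix (Fin d) (Fin d) ℂ} (hA : A.IsHermitian)
    (π : Equiv.Perm (Fin d)) :
    ∃ V ∈ Matrix.unitaryGroup (Fin d) ℂ, A = V * rdiag (hA.eigenvalues ∘ π) * star V := by
  have hs := spec_eq hA
  have hE := (hA.eigenvectorUnitary).2
  set E : Matrix (Fin d) (Fin d) ℂ := (hA.eigenvectorUnitary : Matrix (Fin d) (Fin d) ℂ)
  refine ⟨E.submatrix id π, ?_, ?_⟩
  · rw [Matrix.mem_unitaryGroup_iff, Matrix.star_eq_conjTranspose, Matrix.conjTranspose_submatrix,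
      Matrix.submatrix_mul_equiv, ← Matrix.star_eq_conjTranspose, uni2 hE]
    simp
  · have : rdiag (hA.eigenvalues ∘ π) = (rdiag hA.eigenvalues).submatrix π π := by
      simp only [rdiag]
      rw [Matrix.submatrix_diagonal_equiv]
      rfl
    rw [this, Matrix.star_eq_conjTranspose, Matrix.conjTranspose_submatrix,
      Matrix.submatrix_mul_equiv, Matrix.submatrix_mul_equiv, ← Matrix.star_eq_conjTranspose, ← hs]
    simp

lemma eigUp_mono {d : ℕ} {A : Matrix (Fin d) (Fin d) ℂ} (hA : A.IsHermitian) :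
    Monotone (eigUp hA) := Tuple.monotone_sort _

lemma eigDown_anti {d : ℕ} {A : Matrix (Fin d) (Fin d) ℂ} (hA : A.IsHermitian) :
    Antitone (eigDown hA) := fun _ _ h => eigUp_mono hA (Fin.rev_le_rev.2 h)

lemma diag_up {d : ℕ} {A : Matrix (Fin d) (Fin d) ℂ} (hA : A.IsHermitian) :
    ∃ V ∈ Matrix.unitaryGroup (Fin d) ℂ, A = V * rdiag (eigUp hA) * star V :=
  diag_perm hA (Tuple.sort hA.eigenvalues)

lemma diag_down {d : ℕ} {A : Matrix (Fin d) (Fin d) ℂ} (hA : A.IsHermitian) :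
    ∃ V ∈ Matrix.unitaryGroup (Fin d) ℂ, A = V * rdiag (eigDown hA) * star V :=
  diag_perm hA (Fin.revPerm.trans (Tuple.sort hA.eigenvalues))

lemma eigUp_pos {d : ℕ} {A : Matrix (Fin d) (Fin d) ℂ} (hA : A.PosDef) (i : Fin d) :
    0 < eigUp hA.1 i := hA.eigenvalues_pos _

lemma eigDown_pos {d : ℕ} {A : Matrix (Fin d) (Fin d) ℂ} (hA : A.PosDef) (i : Fin d) :
    0 < eigDown hA.1 i := hA.eigenvalues_pos _

/-! ### Three matrix trace inequality -/

lemma layer {d : ℕ} (w : Fin d → ℝ) (hw : Antitone w) (h0 : ∀ i, 0 ≤ w i) :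
    ∃ δ : Fin d → ℝ, (∀ k, 0 ≤ δ k) ∧ ∀ i, w i = ∑ k, δ k * (if i ≤ k then 1 else 0) := by
  set W : ℕ → ℝ := fun n => if h : n < d then w ⟨n, h⟩ else 0 with hW
  refine ⟨fun k => W k - W (k + 1), ?_, ?_⟩
  · intro k
    simp only [hW, k.2, dif_pos]
    split_ifs with h
    · exact sub_nonneg.2 (hw (Fin.mk_le_mk.2 (Nat.le_succ _)))
    · simpa using h0 k
  · intro i
    have e1 : ∑ k : Fin d, (W k - W (k + 1)) * (if i ≤ k then 1 else 0)
        = ∑ k ∈ Finset.range d, (W k - W (k + 1)) * (if (i : ℕ) ≤ k then 1 else 0) := by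
      rw [Finset.sum_range]
      rfl
    rw [e1]
    have e2 : ∀ n, (i : ℕ) ≤ n →
        ∑ k ∈ Finset.range n, (W k - W (k + 1)) * (if (i : ℕ) ≤ k then 1 else 0) = W i - W n := by
      intro n hn
      induction n, hn using Nat.le_induction with
      | base =>
        rw [sub_self]
        apply Finset.sum_eq_zero
        intro k hk
        have := Finset.mem_range.1 hk
        rw [if_neg (by omega), mul_zero]
      | succ n hn ih =>
        rw [Finset.sum_range_succ, ih, if_pos hn]
        ring
    rw [e2 d i.2.le]
    simp [hW]

section norms
open scoped Matrix.Norms.L2Operator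

lemma entry_le {d : ℕ} (A : Matrix (Fin d) (Fin d) ℂ) (i j : Fin d) : ‖A i j‖ ≤ ‖A‖ := by
  have h := A.l2_opNorm_mulVec (EuclideanSpace.single j (1 : ℂ))
  simp only [EuclideanSpace.norm_single, norm_one, mul_one] at h
  refine le_trans ?_ h
  refine le_trans (le_of_eq ?_) (PiLp.norm_apply_le _ i)
  simp

lemma uni_norm {d : ℕ} {V : Matrix (Fin d) (Fin d) ℂ} (hV : V ∈ Matrix.unitaryGroup (Fin d) ℂ) :
    ‖V‖ ≤ 1 := by
  rcases subsingleton_or_nontrivial (Matrix (Fin d) (Fin d) ℂ) with h | h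
  · rw [Subsingleton.elim V 0]; simp
  · exact (CStarRing.norm_of_mem_unitary hV).le

lemma ind_norm {d : ℕ} (k : Fin d) : ‖rdiag (fun i => if i ≤ k then (1 : ℝ) else 0)‖ ≤ 1 := by
  rw [rdiag, Matrix.l2_opNorm_diagonal, pi_norm_le_iff_of_nonneg zero_le_one]
  intro i
  split_ifs <;> simp

lemma contr_entry {d : ℕ} {U V W : Matrix (Fin d) (Fin d) ℂ}
    (hU : U ∈ Matrix.unitaryGroup (Fin d) ℂ) (hV : V ∈ Matrix.unitaryGroup (Fin d) ℂ)
    (hW : W ∈ Matrix.unitaryGroup (Fin d) ℂ) (b c i : Fin d) :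
    ‖(U * rdiag (fun i => if i ≤ b then (1 : ℝ) else 0) * V *
      rdiag (fun i => if i ≤ c then (1 : ℝ) else 0) * W) i i‖ ≤ 1 := by
  refine (entry_le _ i i).trans ?_
  have h := fun (A B : Matrix (Fin d) (Fin d) ℂ) (ha : ‖A‖ ≤ 1) (hb : ‖B‖ ≤ 1) =>
    (norm_mul_le A B).trans (mul_le_one₀ ha (norm_nonneg _) hb)
  exact h _ _ (h _ _ (h _ _ (h _ _ (uni_norm hU) (ind_norm b)) (uni_norm hV)) (ind_norm c))
    (uni_norm hW)

end norms

/-- triple trace -/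
noncomputable def tri {d : ℕ} (U V W : Matrix (Fin d) (Fin d) ℂ) (x y z : Fin d → ℝ) : ℂ :=
  (rdiag x * U * rdiag y * V * rdiag z * W).trace

lemma tri_cyc {d : ℕ} (U V W : Matrix (Fin d) (Fin d) ℂ) (x y z : Fin d → ℝ) :
    tri U V W x y z = tri V W U y z x := by
  unfold tri
  have : rdiag x * U * rdiag y * V * rdiag z * W = (rdiag x * U) * (rdiag y * V * rdiag z * W) := by
    simp only [mul_assoc]
  rw [this, Matrix.trace_mul_comm]
  simp only [mul_assoc]

lemma tri_ind1 {d : ℕ} {U V W : Matrix (Fin d) (Fin d) ℂ}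
    (hU : U ∈ Matrix.unitaryGroup (Fin d) ℂ) (hV : V ∈ Matrix.unitaryGroup (Fin d) ℂ)
    (hW : W ∈ Matrix.unitaryGroup (Fin d) ℂ) (a b c : Fin d) (hab : a ≤ b) (hac : a ≤ c) :
    ‖tri U V W (fun i => if i ≤ a then 1 else 0) (fun i => if i ≤ b then 1 else 0)
      (fun i => if i ≤ c then 1 else 0)‖ ≤
    ∑ i, (if i ≤ a then (1 : ℝ) else 0) * (if i ≤ b then 1 else 0) * (if i ≤ c then 1 else 0) := by
  unfold tri
  rw [Matrix.trace]
  refine (norm_sum_le _ _).trans (Finset.sum_le_sum fun i _ => ?_)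
  have h := contr_entry hU hV hW b c i
  simp only [mul_assoc] at h ⊢
  rw [Matrix.diag_apply]
  conv_lhs => rw [rdiag, Matrix.diagonal_mul]
  split_ifs with h1 h2 h3 h3
  · simpa using h
  · exact absurd (h1.trans hac) h3
  · exact absurd (h1.trans hab) h2
  · exact absurd (h1.trans hab) h2
  all_goals simp

lemma tri_ind {d : ℕ} {U V W : Matrix (Fin d) (Fin d) ℂ}
    (hU : U ∈ Matrix.unitaryGroup (Fin d) ℂ) (hV : V ∈ Matrix.unitaryGroup (Fin d) ℂ)
    (hW : W ∈ Matrix.unitaryGroup (Fin d) ℂ) (a b c : Fin d) :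
    ‖tri U V W (fun i => if i ≤ a then 1 else 0) (fun i => if i ≤ b then 1 else 0)
      (fun i => if i ≤ c then 1 else 0)‖ ≤
    ∑ i, (if i ≤ a then (1 : ℝ) else 0) * (if i ≤ b then 1 else 0) * (if i ≤ c then 1 else 0) := by
  by_cases h : a ≤ b ∧ a ≤ c
  · exact tri_ind1 hU hV hW a b c h.1 h.2
  by_cases h' : b ≤ c ∧ b ≤ a
  · rw [tri_cyc]
    refine (tri_ind1 hV hW hU b c a h'.1 h'.2).trans (le_of_eq ?_)
    exact Finset.sum_congr rfl fun i _ => by ring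
  · rw [tri_cyc, tri_cyc]
    refine (tri_ind1 hW hU hV c a b (by omega) (by omega)).trans (le_of_eq ?_)
    exact Finset.sum_congr rfl fun i _ => by ring

lemma tri_expand {d : ℕ} (U V W : Matrix (Fin d) (Fin d) ℂ) (x y z : Fin d → ℝ) :
    tri U V W x y z = ∑ i, ∑ j, ∑ k, (x i : ℂ) * y j * z k * (U i j * V j k * W k i) := by
  unfold tri
  simp only [rdiag, mul_assoc, Matrix.trace, Matrix.diag_apply, Matrix.diagonal_mul]
  refine Finset.sum_congr rfl fun i _ => ?_
  rw [Matrix.mul_apply, Finset.mul_sum]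
  refine Finset.sum_congr rfl fun j _ => ?_
  rw [Matrix.diagonal_mul, Matrix.mul_apply, Finset.mul_sum, Finset.mul_sum, Finset.mul_sum]
  refine Finset.sum_congr rfl fun k _ => ?_
  rw [Matrix.diagonal_mul]
  ring

lemma tri_lin {d : ℕ} (U V W : Matrix (Fin d) (Fin d) ℂ) (δ : Fin d → ℝ) (g : Fin d → Fin d → ℝ)
    (x y z : Fin d → ℝ) (hx : ∀ i, x i = ∑ k, δ k * g i k) :
    tri U V W x y z = ∑ k, (δ k : ℂ) * tri U V W (fun i => g i k) y z := by
  have : rdiag x = ∑ k, (δ k : ℂ) • rdiag (fun i => g i k) := by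
    ext i j
    rw [Matrix.sum_apply]
    by_cases h : i = j
    · subst h
      simp [rdiag, hx]
    · simp [rdiag, h]
  unfold tri
  rw [this]
  simp only [Finset.sum_mul, Matrix.trace_sum, Matrix.smul_mul, Matrix.trace_smul, smul_eq_mul]

lemma tri_le {d : ℕ} {U V W : Matrix (Fin d) (Fin d) ℂ}
    (hU : U ∈ Matrix.unitaryGroup (Fin d) ℂ) (hV : V ∈ Matrix.unitaryGroup (Fin d) ℂ)
    (hW : W ∈ Matrix.unitaryGroup (Fin d) ℂ) (x y z : Fin d → ℝ)
    (hx : Antitone x) (hy : Antitone y) (hz : Antitone z)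
    (hx0 : ∀ i, 0 ≤ x i) (hy0 : ∀ i, 0 ≤ y i) (hz0 : ∀ i, 0 ≤ z i) :
    ‖tri U V W x y z‖ ≤ ∑ i, x i * y i * z i := by
  obtain ⟨a, ha, hxa⟩ := layer x hx hx0
  obtain ⟨b, hb, hyb⟩ := layer y hy hy0
  obtain ⟨c, hc, hzc⟩ := layer z hz hz0
  -- one variable at a time
  have key : ∀ {U V W : Matrix (Fin d) (Fin d) ℂ} (δ : Fin d → ℝ) (x y z : Fin d → ℝ),
      (∀ k, 0 ≤ δ k) → (∀ i, x i = ∑ k, δ k * (if i ≤ k then 1 else 0)) →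
      (∀ k : Fin d, ‖tri U V W (fun i => if i ≤ k then 1 else 0) y z‖ ≤
        ∑ i, (if i ≤ k then 1 else 0) * y i * z i) →
      ‖tri U V W x y z‖ ≤ ∑ i, x i * y i * z i := by
    intro U V W δ x y z hδ hx h
    rw [tri_lin U V W δ (fun i k => if i ≤ k then 1 else 0) x y z hx]
    refine (norm_sum_le _ _).trans ?_
    have e : ∑ i, x i * y i * z i =
        ∑ k, δ k * ∑ i, (if i ≤ k then 1 else 0) * y i * z i := by
      simp only [Finset.mul_sum]
      rw [Finset.sum_comm]
      refine Finset.sum_congr rfl fun i _ => ?_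
      rw [hx i, Finset.sum_mul, Finset.sum_mul]
      exact Finset.sum_congr rfl fun k _ => by ring
    rw [e]
    refine Finset.sum_le_sum fun k _ => ?_
    rw [norm_mul, Complex.norm_real, Real.norm_of_nonneg (hδ k)]
    exact mul_le_mul_of_nonneg_left (h k) (hδ k)
  have rot : ∀ x y z : Fin d → ℝ, ∑ i, x i * y i * z i = ∑ i, y i * z i * x i := fun x y z =>
    Finset.sum_congr rfl fun i _ => by ring
  refine key a x y z ha hxa fun k => ?_
  rw [tri_cyc, rot]
  refine key b _ _ _ hb hyb fun l => ?_
  rw [tri_cyc, rot]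
  refine key c _ _ _ hc hzc fun m => ?_
  exact tri_ind hW hU hV m k l

/-! ### Main trace bound -/

lemma trace_bound {d : ℕ} {V W : Matrix (Fin d) (Fin d) ℂ}
    (hV : V ∈ Matrix.unitaryGroup (Fin d) ℂ) (hW : W ∈ Matrix.unitaryGroup (Fin d) ℂ)
    (x y : Fin d → ℝ) (hx : Antitone x) (hy : Antitone y)
    (hx0 : ∀ i, 0 < x i) (hy0 : ∀ i, 0 < y i) (z : ℝ) (hz : 1 / 2 < z) :
    (mpow ((W * rdiag y * star W) * (V * rdiag (fun i => x i * x i) * star V) *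
      (W * rdiag y * star W)) z).trace.re ≤ ∑ i, (x i * y i) ^ (2 * z) ∧
    0 ≤ (mpow ((W * rdiag y * star W) * (V * rdiag (fun i => x i * x i) * star V) *
      (W * rdiag y * star W)) z).trace.re := by
  set G := star V * W with hG
  have hGu : G ∈ Matrix.unitaryGroup (Fin d) ℂ := mul_mem (uniS hV) hW
  set K := rdiag x * G * rdiag y with hK
  set C := (W * rdiag y * star W) * (V * rdiag (fun i => x i * x i) * star V) *
      (W * rdiag y * star W) with hC
  have hCK : C = W * (star K * K) * star W := by
    rw [hC, hK, ← rdiag_mul]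
    simp only [star_mul, rdiag_star, hG, star_star, mul_assoc]
  have hinv : ∀ v : Fin d → ℝ, (∀ i, 0 < v i) → IsUnit (rdiag v) := by
    intro v hv
    refine (Matrix.isUnit_iff_isUnit_det _).2 ?_
    rw [rdiag, Matrix.det_diagonal, isUnit_iff_ne_zero, Finset.prod_ne_zero_iff]
    intro i _
    exact_mod_cast (hv i).ne'
  have huu : ∀ {Q : Matrix (Fin d) (Fin d) ℂ}, Q ∈ Matrix.unitaryGroup (Fin d) ℂ → IsUnit Q :=
    fun hQ => ⟨⟨_, _, uni2 hQ, uni1 hQ⟩, rfl⟩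
  have hCpd : C.PosDef := by
    have hKW : IsUnit (K * star W) := (((hinv x hx0).mul (huu hGu)).mul (hinv y hy0)).mul
      (huu (uniS hW))
    have h1 := (Matrix.IsUnit.posDef_star_left_conjugate_iff (x := (1 : Matrix (Fin d) (Fin d) ℂ))
      hKW).2 Matrix.PosDef.one
    convert h1 using 1
    rw [hCK]
    simp only [star_mul, star_star, mul_assoc, mul_one]
  obtain ⟨E, hE, hCE⟩ := diag_down hCpd.1
  set c := eigDown hCpd.1
  have hc0 : ∀ i, 0 < c i := eigDown_pos hCpd
  have hca : Antitone c := eigDown_anti hCpd.1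
  have htr : (mpow C z).trace.re = ∑ i, c i ^ z := by
    rw [hCE, mpow_conj hE, trace_conj hE]
  rw [htr]
  refine ⟨?_, Finset.sum_nonneg fun i _ => (Real.rpow_pos_of_pos (hc0 i) _).le⟩
  set F := star W * E with hF
  have hFu : F ∈ Matrix.unitaryGroup (Fin d) ℂ := mul_mem (uniS hW) hE
  have hKK : star F * (star K * K) * F = rdiag c := by
    calc star F * (star K * K) * F = star E * (W * (star K * K) * star W) * E := by
          simp only [hF, star_mul, star_star, mul_assoc]
      _ = star E * (E * rdiag c * star E) * E := by rw [← hCK, ← hCE]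
      _ = (star E * E) * rdiag c * (star E * E) := by simp only [mul_assoc]
      _ = _ := by rw [uni1 hE, one_mul, mul_one]
  set P := K * F * rdiag (fun i => c i ^ (-(1/2) : ℝ)) with hP
  have hPu : P ∈ Matrix.unitaryGroup (Fin d) ℂ := by
    rw [Matrix.mem_unitaryGroup_iff']
    calc star P * P = rdiag (fun i => c i ^ (-(1/2) : ℝ)) * (star F * (star K * K) * F) *
          rdiag (fun i => c i ^ (-(1/2) : ℝ)) := by
          simp only [hP, star_mul, rdiag_star, mul_assoc]
      _ = 1 := by
        rw [hKK, rdiag_mul, rdiag_mul, ← rdiag_one]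
        refine rdiag_congr fun i => ?_
        nth_rewrite 2 [← Real.rpow_one (c i)]
        rw [← Real.rpow_add (hc0 i), ← Real.rpow_add (hc0 i)]
        norm_num
  have hPK : star P * K * F = rdiag (fun i => c i ^ (1/2 : ℝ)) := by
    calc star P * K * F = rdiag (fun i => c i ^ (-(1/2) : ℝ)) * (star F * (star K * K) * F) := by
          simp only [hP, star_mul, rdiag_star, mul_assoc]
      _ = _ := by
        rw [hKK, rdiag_mul]
        refine rdiag_congr fun i => ?_
        nth_rewrite 2 [← Real.rpow_one (c i)]
        rw [← Real.rpow_add (hc0 i)]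
        norm_num
  have htri : tri (star P) G F (fun i => c i ^ (z - 1/2)) x y = ((∑ i, c i ^ z : ℝ) : ℂ) := by
    unfold tri
    have : rdiag (fun i => c i ^ (z - 1/2)) * star P * rdiag x * G * rdiag y * F =
        rdiag (fun i => c i ^ (z - 1/2)) * (star P * K * F) := by
      simp only [hK, mul_assoc]
    rw [this, hPK, rdiag_mul, rdiag, Matrix.trace_diagonal]
    push_cast
    refine Finset.sum_congr rfl fun i _ => ?_
    rw [← Complex.ofReal_mul, ← Real.rpow_add (hc0 i)]
    norm_num
  have hle := tri_le (uniS hPu) hGu hFu (fun i => c i ^ (z - 1/2)) x y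
    (fun i j h => Real.rpow_le_rpow (hc0 j).le (hca h) (by linarith)) hx hy
    (fun i => (Real.rpow_pos_of_pos (hc0 i) _).le) (fun i => (hx0 i).le) (fun i => (hy0 i).le)
  rw [htri, Complex.norm_real, Real.norm_of_nonneg
    (Finset.sum_nonneg fun i _ => (Real.rpow_pos_of_pos (hc0 i) _).le)] at hle
  have hz0 : 0 < z := by linarith
  have hyoung : ∀ i, c i ^ (z - 1/2) * x i * y i ≤
      (1 - 1 / (2 * z)) * c i ^ z + 1 / (2 * z) * (x i * y i) ^ (2 * z) := by
    intro i
    have hxy : 0 < x i * y i := mul_pos (hx0 i) (hy0 i)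
    have h := Real.geom_mean_le_arith_mean2_weighted (w₁ := 1 - 1 / (2 * z)) (w₂ := 1 / (2 * z))
      (p₁ := c i ^ z) (p₂ := (x i * y i) ^ (2 * z))
      (by rw [sub_nonneg, div_le_one (by linarith)]; linarith) (by positivity)
      (Real.rpow_pos_of_pos (hc0 i) _).le (Real.rpow_pos_of_pos hxy _).le (by ring)
    rw [← Real.rpow_mul (hc0 i).le, ← Real.rpow_mul hxy.le] at h
    have e1 : z * (1 - 1 / (2 * z)) = z - 1/2 := by field_simp
    have e2 : 2 * z * (1 / (2 * z)) = 1 := by field_simp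
    rw [e1, e2, Real.rpow_one] at h
    linarith
  have hsum := hle.trans (Finset.sum_le_sum fun i _ => hyoung i)
  rw [Finset.sum_add_distrib, ← Finset.mul_sum, ← Finset.mul_sum] at hsum
  have hp : 0 < 1 / (2 * z) := by positivity
  have : 1 / (2 * z) * ∑ i, c i ^ z ≤ 1 / (2 * z) * ∑ i, (x i * y i) ^ (2 * z) := by linarith
  exact le_of_mul_le_mul_left this hp

/-! ### Majorization part -/

lemma ds_rearr {d : ℕ} (D : Matrix (Fin d) (Fin d) ℝ) (hD : D ∈ doublyStochastic ℝ (Fin d))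
    (a b : Fin d → ℝ) (hab : Monovary a b) :
    ∑ j, a j * ∑ i, D j i * b i ≤ ∑ i, a i * b i := by
  obtain ⟨w, hw0, hw1, hw⟩ := exists_eq_sum_perm_of_mem_doublyStochastic hD
  have e : ∀ j, ∑ i, D j i * b i = ∑ π, w π * b (π j) := by
    intro j
    have : ∀ i, D j i = ∑ π, w π * (if π j = i then 1 else 0) := by
      intro i
      rw [← hw, Matrix.sum_apply]
      refine Finset.sum_congr rfl fun π _ => ?_
      simp [Equiv.Perm.permMatrix, PEquiv.toMatrix_apply, Equiv.toPEquiv_apply]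
    simp only [this, Finset.sum_mul]
    rw [Finset.sum_comm]
    refine Finset.sum_congr rfl fun π _ => ?_
    simp
  simp only [e, Finset.mul_sum]
  rw [Finset.sum_comm]
  calc ∑ π : Equiv.Perm (Fin d), ∑ j, a j * (w π * b (π j))
      = ∑ π : Equiv.Perm (Fin d), w π * ∑ j, a j * b (π j) := by
        refine Finset.sum_congr rfl fun π _ => ?_
        rw [Finset.mul_sum]
        exact Finset.sum_congr rfl fun j _ => by ring
    _ ≤ ∑ π : Equiv.Perm (Fin d), w π * ∑ j, a j * b j :=
        Finset.sum_le_sum fun π _ => mul_le_mul_of_nonneg_left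
          hab.sum_mul_comp_perm_le_sum_mul (hw0 π)
    _ = _ := by rw [← Finset.sum_mul, hw1, one_mul]

lemma uni_row {d : ℕ} {Q : Matrix (Fin d) (Fin d) ℂ} (hQ : Q ∈ Matrix.unitaryGroup (Fin d) ℂ)
    (j : Fin d) : ∑ i, ‖Q j i‖ ^ 2 = 1 := by
  have h := congrFun (congrFun (uni2 hQ) j) j
  rw [Matrix.mul_apply] at h
  simp only [Matrix.star_apply, Matrix.one_apply_eq] at h
  have h2 : ∀ i, Q j i * star (Q j i) = ((‖Q j i‖ ^ 2 : ℝ) : ℂ) := by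
    intro i
    rw [Complex.star_def, Complex.mul_conj, Complex.normSq_eq_norm_sq]
  simp only [h2] at h
  exact_mod_cast h

lemma uni_col {d : ℕ} {Q : Matrix (Fin d) (Fin d) ℂ} (hQ : Q ∈ Matrix.unitaryGroup (Fin d) ℂ)
    (i : Fin d) : ∑ j, ‖Q j i‖ ^ 2 = 1 := by
  have := uni_row (uniS hQ) i
  simpa [Matrix.star_apply] using this

lemma diag_entry {d : ℕ} (Q : Matrix (Fin d) (Fin d) ℂ) (s : Fin d → ℝ) (j : Fin d) :
    (Q * rdiag s * star Q) j j = ((∑ i, ‖Q j i‖ ^ 2 * s i : ℝ) : ℂ) := by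
  rw [Matrix.mul_apply]
  push_cast
  refine Finset.sum_congr rfl fun i _ => ?_
  rw [rdiag, Matrix.mul_diagonal, Matrix.star_apply, Complex.star_def, mul_right_comm,
    Complex.mul_conj, Complex.normSq_eq_norm_sq]
  push_cast
  ring

lemma exists_ds {d k : ℕ} {V S : Matrix (Fin d) (Fin d) ℂ}
    (hV : V ∈ Matrix.unitaryGroup (Fin d) ℂ) (hS : S ∈ Matrix.unitaryGroup (Fin d) ℂ)
    (t s : Fin d → ℝ) (p : Fin k → ℝ) (U : Fin k → Matrix.unitaryGroup (Fin d) ℂ)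
    (hp : ∀ i, 0 ≤ p i) (hp1 : ∑ i, p i = 1)
    (h : ∑ i, ((p i : ℝ) : ℂ) • ((U i : Matrix (Fin d) (Fin d) ℂ) * (S * rdiag s * star S) *
                star (U i : Matrix (Fin d) (Fin d) ℂ)) = V * rdiag t * star V) :
    ∃ D ∈ doublyStochastic ℝ (Fin d), ∀ j, t j = ∑ i, D j i * s i := by
  set Q : Fin k → Matrix (Fin d) (Fin d) ℂ := fun m => star V * (U m : Matrix _ _ ℂ) * S with hQ
  have hQu : ∀ m, Q m ∈ Matrix.unitaryGroup (Fin d) ℂ := fun m =>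
    mul_mem (mul_mem (uniS hV) (U m).2) hS
  refine ⟨Matrix.of fun j i => ∑ m, p m * ‖Q m j i‖ ^ 2, ?_, ?_⟩
  · rw [mem_doublyStochastic_iff_sum]
    simp only [Matrix.of_apply]
    refine ⟨fun i j => Finset.sum_nonneg fun m _ => mul_nonneg (hp m) (sq_nonneg _), ?_, ?_⟩
    · intro j
      rw [Finset.sum_comm]
      simp only [← Finset.mul_sum, uni_row (hQu _), mul_one, hp1]
    · intro i
      rw [Finset.sum_comm]
      simp only [← Finset.mul_sum, uni_col (hQu _), mul_one, hp1]
  · intro j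
    have h1 : rdiag t = ∑ m, ((p m : ℝ) : ℂ) • (Q m * rdiag s * star (Q m)) := by
      calc rdiag t = (star V * V) * rdiag t * (star V * V) := by rw [uni1 hV, one_mul, mul_one]
        _ = star V * (V * rdiag t * star V) * V := by simp only [mul_assoc]
        _ = _ := by
          rw [← h, Finset.mul_sum, Finset.sum_mul]
          refine Finset.sum_congr rfl fun m _ => ?_
          rw [Matrix.mul_smul, Matrix.smul_mul]
          simp only [hQ, star_mul, star_star, mul_assoc]
    have h2 := congrFun (congrFun h1 j) j
    rw [Matrix.sum_apply] at h2
    simp only [Matrix.smul_apply, diag_entry] at h2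
    simp only [rdiag, Matrix.diagonal_apply_eq, smul_eq_mul] at h2
    have h3 : t j = ∑ m, p m * ∑ i, ‖Q m j i‖ ^ 2 * s i := by exact_mod_cast h2
    rw [h3]
    simp only [Matrix.of_apply]
    simp only [Finset.mul_sum, Finset.sum_mul]
    rw [Finset.sum_comm]
    exact Finset.sum_congr rfl fun i _ => Finset.sum_congr rfl fun m _ => by ring

lemma jensen_neg {d : ℕ} (w s : Fin d → ℝ) (hw : ∀ i, 0 ≤ w i) (hw1 : ∑ i, w i = 1)
    (hs : ∀ i, 0 < s i) (β : ℝ) (hβ : β ≤ 0) :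
    (∑ i, w i * s i) ^ β ≤ ∑ i, w i * s i ^ β := by
  have hpos : 0 < ∑ i, w i * s i := by
    have := (convex_Ioi (0 : ℝ)).sum_mem (t := Finset.univ) (w := w) (z := s)
      (fun i _ => hw i) hw1 (fun i _ => hs i)
    simpa using this
  have h1 := strictConcaveOn_log_Ioi.concaveOn.le_map_sum (t := Finset.univ) (w := w) (p := s)
      (fun i _ => hw i) hw1 (fun i _ => hs i)
  have h2 := convexOn_exp.map_sum_le (t := Finset.univ) (w := w) (p := fun i => Real.log (s i) * β)
      (fun i _ => hw i) hw1 (fun i _ => Set.mem_univ _)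
  simp only [smul_eq_mul] at h1 h2
  rw [Real.rpow_def_of_pos hpos]
  simp only [Real.rpow_def_of_pos (hs _)]
  refine le_trans (Real.exp_le_exp.2 ?_) h2
  have := mul_le_mul_of_nonpos_right h1 hβ
  refine this.trans (le_of_eq ?_)
  rw [Finset.sum_mul]
  exact Finset.sum_congr rfl fun i _ => by ring

lemma faz_attain {d : ℕ} {ρ σ : Matrix (Fin d) (Fin d) ℂ}
    (hρ : ρ.PosDef) (hσ : σ.PosDef) (α z : ℝ) (hz : 0 < z) :
    ∃ U ∈ Matrix.unitaryGroup (Fin d) ℂ,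
      Faz ρ (U * σ * star U) α z = FazC (eigDown hρ.1) (eigUp hσ.1) α := by
  obtain ⟨V, hV, hρV⟩ := diag_down hρ.1
  obtain ⟨S, hS, hσS⟩ := diag_up hσ.1
  have hr := eigDown_pos hρ
  have hs := eigUp_pos hσ
  set r := eigDown hρ.1
  set s := eigUp hσ.1
  refine ⟨V * star S, mul_mem hV (uniS hS), ?_⟩
  have e : V * star S * σ * star (V * star S) = V * rdiag s * star V := by
    calc _ = V * star S * (S * rdiag s * star S) * star (V * star S) := by rw [← hσS]
      _ = V * (star S * S) * rdiag s * (star S * S) * star V := by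
        simp only [star_mul, star_star, mul_assoc]
      _ = _ := by rw [uni1 hS, mul_one, mul_one]
  unfold Faz FazC
  rw [e]
  conv_lhs => rw [hρV]
  rw [mpow_conj hV, mpow_conj hV, conj_mul_conj hV, conj_mul_conj hV, mpow_conj hV, trace_conj hV]
  congr 1
  refine Finset.sum_congr rfl fun i => fun _ => ?_
  have h1 := Real.rpow_pos_of_pos (hs i) ((1 - α) / (2 * z))
  have h2 := Real.rpow_pos_of_pos (hr i) (α / z)
  rw [Real.mul_rpow (mul_pos h1 h2).le h1.le, Real.mul_rpow h1.le h2.le,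
    ← Real.rpow_mul (hs i).le, ← Real.rpow_mul (hr i).le]
  have e1 : α / z * z = α := by field_simp
  rw [e1, mul_right_comm, ← Real.rpow_add (hs i), mul_comm]
  congr 2
  field_simp
  ring

lemma faz_upper {d k : ℕ} {ρ σ : Matrix (Fin d) (Fin d) ℂ}
    (hρ : ρ.PosDef) (hσ : σ.PosDef) (α z : ℝ) (hα : 1 < α) (hz : 1 / 2 < z)
    (p : Fin k → ℝ) (U : Fin k → Matrix.unitaryGroup (Fin d) ℂ)
    (hp : ∀ i, 0 ≤ p i) (hp1 : ∑ i, p i = 1) :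
    Faz ρ (∑ i, ((p i : ℝ) : ℂ) • ((U i : Matrix (Fin d) (Fin d) ℂ) * σ *
                star (U i : Matrix (Fin d) (Fin d) ℂ))) α z
      ≤ FazC (eigDown hρ.1) (eigUp hσ.1) α := by
  obtain ⟨V, hV, hρV⟩ := diag_down hρ.1
  obtain ⟨S, hS, hσS⟩ := diag_up hσ.1
  have hr := eigDown_pos hρ
  have hs := eigUp_pos hσ
  have hra := eigDown_anti hρ.1
  have hsm := eigUp_mono hσ.1
  set r := eigDown hρ.1
  set s := eigUp hσ.1
  set τ := ∑ i, ((p i : ℝ) : ℂ) • ((U i : Matrix (Fin d) (Fin d) ℂ) * σ *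
                star (U i : Matrix (Fin d) (Fin d) ℂ)) with hτ
  have hτh : τ.IsHermitian := by
    show star τ = τ
    have hσh : star σ = σ := hσ.1
    rw [hτ, star_sum]
    refine Finset.sum_congr rfl fun i _ => ?_
    rw [star_smul, star_mul, star_mul, star_star, hσh, mul_assoc]
    simp
  obtain ⟨W, hW, hτW⟩ := diag_up hτh
  have htm := eigUp_mono hτh
  set t := eigUp hτh
  obtain ⟨D, hD, hDt⟩ := exists_ds hW hS t s p U hp hp1 (by rw [← hσS, ← hτW])
  have hDs := mem_doublyStochastic_iff_sum.1 hD
  have ht : ∀ j, 0 < t j := by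
    intro j
    rw [hDt j]
    have := (convex_Ioi (0 : ℝ)).sum_mem (t := Finset.univ) (w := fun i => D j i) (z := s)
      (fun i _ => hDs.1 j i) (hDs.2.1 j) (fun i _ => hs i)
    simpa using this
  have hz0 : 0 < z := by linarith
  set x : Fin d → ℝ := fun i => r i ^ (α / (2 * z)) with hx
  set y : Fin d → ℝ := fun i => t i ^ ((1 - α) / (2 * z)) with hy
  have hx0 : ∀ i, 0 < x i := fun i => Real.rpow_pos_of_pos (hr i) _
  have hy0 : ∀ i, 0 < y i := fun i => Real.rpow_pos_of_pos (ht i) _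
  have hxx : (fun i => r i ^ (α / z)) = fun i => x i * x i := by
    funext i
    rw [hx, ← Real.rpow_add (hr i)]
    congr 1
    field_simp
    norm_num
  have hmain := trace_bound hV hW x y
    (fun i j h => Real.rpow_le_rpow (hr j).le (hra h) (by positivity))
    (fun i j h => Real.rpow_le_rpow_of_nonpos (ht i) (htm h)
      (div_nonpos_of_nonpos_of_nonneg (by linarith) (by positivity))) hx0 hy0 z hz
  rw [← hxx, ← mpow_conj hV, ← mpow_conj hW, ← hρV, ← hτW] at hmain
  unfold Faz FazC
  refine Real.rpow_le_rpow hmain.2 (hmain.1.trans ?_) (by positivity)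
  have e : ∀ i, (x i * y i) ^ (2 * z) = r i ^ α * t i ^ (1 - α) := by
    intro i
    rw [Real.mul_rpow (hx0 i).le (hy0 i).le, hx, hy, ← Real.rpow_mul (hr i).le,
      ← Real.rpow_mul (ht i).le]
    congr 2 <;> field_simp
  simp only [e]
  calc ∑ i, r i ^ α * t i ^ (1 - α)
      ≤ ∑ j, r j ^ α * ∑ i, D j i * s i ^ (1 - α) := by
        refine Finset.sum_le_sum fun j _ => mul_le_mul_of_nonneg_left ?_
          (Real.rpow_pos_of_pos (hr j) _).le
        rw [hDt j]
        exact jensen_neg _ _ (hDs.1 j) (hDs.2.1 j) hs _ (by linarith)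
    _ ≤ _ := by
        refine ds_rearr D hD (fun i => r i ^ α) (fun i => s i ^ (1 - α)) ?_
        refine Antitone.monovary ?_ ?_
        · exact fun i j h => Real.rpow_le_rpow (hr j).le (hra h) (by linarith)
        · exact fun i j h => Real.rpow_le_rpow_of_nonpos (hs i) (hsm h) (by linarith)

/-- for positive definite density matrices `ρ, σ` and `(α,z)` with
`1 < α ≤ 2, α/2 ≤ z ≤ α` or `2 ≤ α, α−1 ≤ z ≤ α`, the maximum of
`F_{α,z}(ρ, Σ_i p_i U_i σ U_i*)` over all mixed unitary channels equals
`F_α^C(λ↓(ρ), λ↑(σ))`, attained by a single unitary conjugation. -/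
theorem stmt_16 {d : ℕ} (ρ σ : Matrix (Fin d) (Fin d) ℂ)
    (hρ : ρ.PosDef) (hσ : σ.PosDef) (hρ1 : ρ.trace = 1) (hσ1 : σ.trace = 1)
    (α z : ℝ)
    (hαz : (1 < α ∧ α ≤ 2 ∧ α / 2 ≤ z ∧ z ≤ α) ∨ (2 ≤ α ∧ α - 1 ≤ z ∧ z ≤ α)) :
    IsGreatest {x : ℝ | ∃ (k : ℕ) (p : Fin k → ℝ)
        (U : Fin k → Matrix.unitaryGroup (Fin d) ℂ),
        (∀ i, 0 ≤ p i) ∧ ∑ i, p i = 1 ∧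
        x = Faz ρ (∑ i, ((p i : ℝ) : ℂ) •
              ((U i : Matrix (Fin d) (Fin d) ℂ) * σ *
                star (U i : Matrix (Fin d) (Fin d) ℂ))) α z}
      (FazC (eigDown hρ.1) (eigUp hσ.1) α) ∧
    ∃ U ∈ Matrix.unitaryGroup (Fin d) ℂ,
      Faz ρ (U * σ * star U) α z = FazC (eigDown hρ.1) (eigUp hσ.1) α := by
  have h : 1 < α ∧ 1 / 2 < z := by
    rcases hαz with ⟨h1, h2, h3, h4⟩ | ⟨h1, h2, h3⟩ <;> constructor <;> linarith
  obtain ⟨U, hU, hUe⟩ := faz_attain hρ hσ α z (by linarith [h.2])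
  refine ⟨⟨⟨1, fun _ => 1, fun _ => ⟨U, hU⟩, fun _ => zero_le_one, by simp, ?_⟩, ?_⟩, U, hU, hUe⟩
  · simp [← hUe]
  · rintro x ⟨k, p, V, hp, hp1, rfl⟩
    exact faz_upper hρ hσ α z h.1 h.2 p V hp hp1
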